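/- Let R be a commutative ring containing ℚ, L a set of letters, and ⋄: (R·L) × (R·L) → R⟨L⟩ any R-bilinear map. Then for all x, y ∈ R⟨L⟩ the generalized quasi-shuffle product and the generalized dual product associated to ⋄ coincide: x ⧢̂ y = x ⧢̄ y. -/

import Mathlib

/-!
A product on `R⟨L⟩` with unit `𝟏` is determined on pairs of words by the last-letter recursion, and
hence everywhere by bilinearity. So it suffices that `⧢̂`, defined by stripping first letters, also
satisfies the last-letter recursion (`sh_snoc_snoc`). This goes by induction on both words: strip
the first letters of `x = e w a` and `y = c v b`, apply the induction hypothesis to the three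
resulting products (whose last letters are still `a` and `b`), and regroup the nine terms, which are
those obtained by stripping last letters first. Associativity of concatenation is all that is used,
because first letters act by left and last letters by right multiplication. When one of the words is
a single letter, its first and last letter coincide and the terms are matched directly.
-/

/- STATEMENT 7: For any R-bilinear map ⋄ : (R·L) × (R·L) → R⟨L⟩, the generalized
quasi-shuffle product and the generalized dual product associated to ⋄ coincide.
A bilinear map ⋄ on R·L with values in R⟨L⟩ is determined by its values
d : L → L → R⟨L⟩ on the letters. -/

noncomputable section

def ofW (R : Type*) [CommRing R] {L : Type*} (w : List L) :
    MonoidAlgebra R (FreeMonoid L) :=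
  MonoidAlgebra.of R (FreeMonoid L) (FreeMonoid.ofList w)

theorem ofW_nil (R : Type*) [CommRing R] {L : Type*} : ofW R ([] : List L) = 1 :=
  map_one (MonoidAlgebra.of R (FreeMonoid L))

theorem ofW_append (R : Type*) [CommRing R] {L : Type*} (w v : List L) :
    ofW R (w ++ v) = ofW R w * ofW R v := by
  simp only [ofW, FreeMonoid.ofList_append, map_mul]

theorem ofW_cons (R : Type*) [CommRing R] {L : Type*} (a : L) (w : List L) :
    ofW R (a :: w) = ofW R [a] * ofW R w :=
  ofW_append R [a] w

/-- A product with unit `𝟏` and the first-letter recursion also has the last-letter recursion. The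
product is only evaluated on pairs of words, so it is given as a function `f` of two words. -/
theorem sh_snoc_snoc {R L : Type*} [CommRing R] (d : L → L → MonoidAlgebra R (FreeMonoid L))
    (f : List L → List L → MonoidAlgebra R (FreeMonoid L))
    (hl : ∀ v, f [] v = ofW R v) (hr : ∀ w, f w [] = ofW R w)
    (hf : ∀ (a b : L) (w v : List L), f (a :: w) (b :: v) =
      ofW R [a] * f w (b :: v) + ofW R [b] * f (a :: w) v + d a b * f w v)
    (a b : L) (w v : List L) :
    f (w ++ [a]) (v ++ [b]) =
      f w (v ++ [b]) * ofW R [a] + f (w ++ [a]) v * ofW R [b] + f w v * d a b := by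
  induction w generalizing v with
  | nil =>
    induction v with
    | nil =>
      simp only [List.nil_append, hf, hl, hr, ofW_nil, mul_one, one_mul]
      abel
    | cons c v ih =>
      simp only [List.nil_append, List.cons_append, hf, hl] at ih ⊢
      rw [ih, ofW_cons R c (v ++ [b]), ofW_cons R c v, ofW_append R v [b]]
      noncomm_ring
  | cons e w ihw =>
    induction v with
    | nil =>
      have h := ihw []
      simp only [List.nil_append, List.cons_append, hf, hr] at h ⊢
      rw [h, ofW_cons R e (w ++ [a]), ofW_cons R e w, ofW_append R w [a]]
      noncomm_ring
    | cons c v ihv =>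
      have h₁ := ihw (c :: v)
      have h₂ := ihw v
      simp only [List.cons_append, hf] at h₁ ihv ⊢
      rw [h₁, ihv, h₂]
      noncomm_ring

/-- On words, a product with unit `𝟏` is determined by the last-letter recursion. -/
theorem eq_of_snoc_snoc {R L : Type*} [CommRing R] (d : L → L → MonoidAlgebra R (FreeMonoid L))
    (f g : List L → List L → MonoidAlgebra R (FreeMonoid L))
    (hl : ∀ v, f [] v = g [] v) (hr : ∀ w, f w [] = g w [])
    (hf : ∀ (a b : L) (w v : List L), f (w ++ [a]) (v ++ [b]) =
      f w (v ++ [b]) * ofW R [a] + f (w ++ [a]) v * ofW R [b] + f w v * d a b)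
    (hg : ∀ (a b : L) (w v : List L), g (w ++ [a]) (v ++ [b]) =
      g w (v ++ [b]) * ofW R [a] + g (w ++ [a]) v * ofW R [b] + g w v * d a b)
    (w v : List L) : f w v = g w v := by
  induction w using List.reverseRecOn generalizing v with
  | nil => exact hl v
  | append_singleton w a ihw =>
    induction v using List.reverseRecOn with
    | nil => exact hr _
    | append_singleton v b ihv => rw [hf, hg, ihw, ihw, ihv]

theorem generalized_quasi_shuffle_eq_dual
    (R L : Type*) [CommRing R] [Algebra ℚ R]
    -- ⋄ : an arbitrary R-bilinear map (R·L) × (R·L) → R⟨L⟩, given by its values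
    -- on the letters
    (d : L → L → MonoidAlgebra R (FreeMonoid L))
    -- the generalized quasi-shuffle product ⧢̂ : an R-bilinear product on R⟨L⟩ ...
    (sh : MonoidAlgebra R (FreeMonoid L) →ₗ[R]
        MonoidAlgebra R (FreeMonoid L) →ₗ[R] MonoidAlgebra R (FreeMonoid L))
    -- ... satisfying 𝟏 ⧢̂ x = x ⧢̂ 𝟏 = x ...
    (hsh_one : ∀ x, sh 1 x = x) (hsh_one' : ∀ x, sh x 1 = x)
    -- ... and x ⧢̂ y = F(x)(R(x) ⧢̂ y) + F(y)(x ⧢̂ R(y)) + (F(x)⋄F(y))(R(x) ⧢̂ R(y))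
    -- for nonempty words x = aw, y = bv
    (hsh : ∀ (a b : L) (w v : List L),
      sh (ofW R (a :: w)) (ofW R (b :: v)) =
        ofW R [a] * sh (ofW R w) (ofW R (b :: v))
        + ofW R [b] * sh (ofW R (a :: w)) (ofW R v)
        + d a b * sh (ofW R w) (ofW R v))
    -- the generalized dual product ⧢̄ : an R-bilinear product on R⟨L⟩ ...
    (dsh : MonoidAlgebra R (FreeMonoid L) →ₗ[R]
        MonoidAlgebra R (FreeMonoid L) →ₗ[R] MonoidAlgebra R (FreeMonoid L))
    -- ... satisfying 𝟏 ⧢̄ x = x ⧢̄ 𝟏 = x ...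
    (hdsh_one : ∀ x, dsh 1 x = x) (hdsh_one' : ∀ x, dsh x 1 = x)
    -- ... and x ⧢̄ y = (R̄(x) ⧢̄ y)F̄(x) + (x ⧢̄ R̄(y))F̄(y) + (R̄(x) ⧢̄ R̄(y))(F̄(x)⋄F̄(y))
    -- for nonempty words x = wa, y = vb
    (hdsh : ∀ (a b : L) (w v : List L),
      dsh (ofW R (w ++ [a])) (ofW R (v ++ [b])) =
        dsh (ofW R w) (ofW R (v ++ [b])) * ofW R [a]
        + dsh (ofW R (w ++ [a])) (ofW R v) * ofW R [b]
        + dsh (ofW R w) (ofW R v) * d a b) :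
    -- conclusion: x ⧢̂ y = x ⧢̄ y for all x, y ∈ R⟨L⟩
    ∀ x y : MonoidAlgebra R (FreeMonoid L), sh x y = dsh x y := by
  have key : ∀ w v : List L, sh (ofW R w) (ofW R v) = dsh (ofW R w) (ofW R v) :=
    eq_of_snoc_snoc d (fun w v => sh (ofW R w) (ofW R v)) (fun w v => dsh (ofW R w) (ofW R v))
      (fun v => by simp only [ofW_nil, hsh_one, hdsh_one])
      (fun w => by simp only [ofW_nil, hsh_one', hdsh_one'])
      (sh_snoc_snoc d (fun w v => sh (ofW R w) (ofW R v))
        (fun v => by simp only [ofW_nil, hsh_one])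
        (fun w => by simp only [ofW_nil, hsh_one']) hsh)
      hdsh
  have h : sh = dsh := by
    ext w v : 4
    exact key (FreeMonoid.toList w) (FreeMonoid.toList v)
  intro x y
  rw [h]
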